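/- For every valid layout ℓ: if ℓ is deserializable, then for every position j at which ℓ has the item V there exist a position p and naturals o, s such that the item at position p of ℓ is the pointer P o s and o ≤ j < o + s (i.e., j lies in the range of some pointer occurring in ℓ). -/

import Mathlib

/-- A layout item: fixed-length field, variable-length field, or pointer `P o s`
with offset `o` and span `s`. -/
inductive Item : Type where
  | F : Item
  | V : Item
  | P : ℕ → ℕ → Item
deriving DecidableEq

/-- A layout is valid if every pointer `P o s` occurring in it satisfies
`o < |ℓ|` and `s ≤ |ℓ| - o`. -/
def ValidLayout (ℓ : List Item) : Prop :=
  ∀ o s : ℕ, Item.P o s ∈ ℓ → o < ℓ.length ∧ s ≤ ℓ.length - o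

/-- Facts the parser can know about positions of the layout. -/
inductive ParseFact : Type where
  | Beg : ℕ → ParseFact
  | Len : ℕ → ParseFact
  | Val : ℕ → ParseFact
deriving DecidableEq

/-- The smallest set of facts closed under the parser's inference rules. -/
inductive Derivable (ℓ : List Item) : ParseFact → Prop where
  | begin : Derivable ℓ (.Beg 0)
  | fieldF (i : ℕ) : ℓ[i]? = some .F → Derivable ℓ (.Len i)
  | fieldP (i o s : ℕ) : ℓ[i]? = some (.P o s) → Derivable ℓ (.Len i)
  | forwardVal (i : ℕ) : Derivable ℓ (.Beg i) → Derivable ℓ (.Len i) → Derivable ℓ (.Val i)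
  | forwardBeg (i : ℕ) : Derivable ℓ (.Beg i) → Derivable ℓ (.Len i) → Derivable ℓ (.Beg (i+1))
  | backwardBeg (i : ℕ) : Derivable ℓ (.Beg (i+1)) → Derivable ℓ (.Len i) → Derivable ℓ (.Beg i)
  | backwardVal (i : ℕ) : Derivable ℓ (.Beg (i+1)) → Derivable ℓ (.Len i) → Derivable ℓ (.Val i)
  | join (i : ℕ) : Derivable ℓ (.Beg i) → Derivable ℓ (.Beg (i+1)) → Derivable ℓ (.Len i)
  | jumpRight (i o s : ℕ) : ℓ[i]? = some (.P o s) → Derivable ℓ (.Val i) →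
      Derivable ℓ (.Beg o) → Derivable ℓ (.Beg (o+s))
  | jumpLeft (i o s : ℕ) : ℓ[i]? = some (.P o s) → Derivable ℓ (.Val i) →
      Derivable ℓ (.Beg (o+s)) → Derivable ℓ (.Beg o)

/-- A layout is deserializable if the length of every varfield is derivable. -/
def Deserializable (ℓ : List Item) : Prop :=
  ∀ j : ℕ, ℓ[j]? = some Item.V → Derivable ℓ (.Len j)

/-!
A position `j` that is neither a field of known length nor in the range of a pointer is a barrier
to the parser, which starts at position `0`. Crossing from `Beg j` to `Beg (j + 1)` by a forward
step requires `Len j`; inferring `Len j` by a join requires `Beg (j + 1)`; and a pointer that jumps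
across the barrier has `j` in its range. So neither fact is ever derived.
-/

/-- The position `j` lies in the range `[o, o + s)` of some pointer `P o s` occurring in
`ℓ`. -/
def InPointerRange (ℓ : List Item) (j : ℕ) : Prop :=
  ∃ p o s : ℕ, ℓ[p]? = some (Item.P o s) ∧ o ≤ j ∧ j < o + s

/-- The invariant of a parser blocked at position `j`: it knows no beginning past `j`, and it does
not know the length of `j` itself. Lengths of fields past `j` are allowed, since the field rule
provides them regardless of how far the parser has come. -/
def ParseFact.RespectsBarrier (j : ℕ) : ParseFact → Prop
  | .Beg i => i ≤ j
  | .Len i => i ≠ j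
  | .Val _ => True

section Barrier

variable {ℓ : List Item} {j : ℕ}

lemma add_le_of_not_inPointerRange (hrange : ¬ InPointerRange ℓ j) {p o s : ℕ}
    (hp : ℓ[p]? = some (.P o s)) (ho : o ≤ j) : o + s ≤ j :=
  not_lt.mp fun hlt => hrange ⟨p, o, s, hp, ho, hlt⟩

lemma Derivable.respectsBarrier (hF : ℓ[j]? ≠ some .F) (hP : ∀ o s, ℓ[j]? ≠ some (.P o s))
    (hrange : ¬ InPointerRange ℓ j) {f : ParseFact} (hf : Derivable ℓ f) :
    f.RespectsBarrier j := by
  induction hf with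
  | begin => exact Nat.zero_le j
  | fieldF i hi => exact fun hij => hF (hij ▸ hi)
  | fieldP i o s hi => exact fun hij => hP o s (hij ▸ hi)
  | forwardVal | backwardVal => trivial
  | forwardBeg i _ _ hbeg hlen => exact lt_of_le_of_ne hbeg hlen
  | backwardBeg i _ _ hbeg _ => exact (Nat.le_succ i).trans hbeg
  | join i _ _ _ hbeg => exact Nat.ne_of_lt hbeg
  | jumpRight p o s hp _ _ _ hbeg => exact add_le_of_not_inPointerRange hrange hp hbeg
  | jumpLeft _ o s _ _ _ _ hbeg => exact (Nat.le_add_right o s).trans hbeg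

theorem necessary_bounding_general (hj : ℓ[j]? = some .V) (hlen : Derivable ℓ (.Len j)) :
    InPointerRange ℓ j := by
  by_contra hrange
  have hbarrier : (ParseFact.Len j).RespectsBarrier j :=
    hlen.respectsBarrier (by simp [hj]) (by simp [hj]) hrange
  exact hbarrier rfl

end Barrier

/-- Necessary condition for deserializability: every varfield position lies in the
range of some pointer occurring in the layout. -/
theorem necessary_bounding (ℓ : List Item) (hval : ValidLayout ℓ)
    (hdes : Deserializable ℓ) (j : ℕ) (hj : ℓ[j]? = some Item.V) :
    ∃ p o s : ℕ, ℓ[p]? = some (Item.P o s) ∧ o ≤ j ∧ j < o + s :=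
  necessary_bounding_general hj (hdes j hj)
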